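/- Let G be a finite connected simple graph, let w be an injective weight function from the edges of G to the reals, and let T be the (unique) minimum-weight spanning tree of G. Let e be an edge of G not in T with endpoints u and v, and let w' be a weight function agreeing with w on every edge except e, with w'(e) < w(e), and with w' still injective. Let f be the maximum-weight (under w') edge on the unique path in T from u to v. If w'(e) > w'(f) then T is the minimum-weight spanning tree of G under w'; otherwise (T ∪ {e}) ∖ {f} is the minimum-weight spanning tree of G under w'. -/

import Mathlib

open SimpleGraph

/-- The total weight of (the edges of) a graph. -/
noncomputable def totalWeight {V : Type*} (w : Sym2 V → ℝ) (H : SimpleGraph V) : ℝ :=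
  ∑ᶠ e ∈ H.edgeSet, w e

/-- `T` is a minimum-weight spanning tree of `G` with respect to the edge weights `w`. -/
def IsMinSpanningTree {V : Type*} (G : SimpleGraph V) (w : Sym2 V → ℝ)
    (T : SimpleGraph V) : Prop :=
  T ≤ G ∧ T.IsTree ∧ ∀ T' : SimpleGraph V, T' ≤ G → T'.IsTree →
    totalWeight w T ≤ totalWeight w T'

/-!
A minimum spanning tree `T` of `G` avoiding `e = s(u, v)` is one of `G - e`, where the old and new
weights agree, so it is enough to understand what happens when `e` is inserted into `G - e`.
Let `F` be a spanning tree through `e`. The graph `F - e` separates `u` from `v`, so some edge `g`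
of the path from `u` to `v` in `T` joins its two components. The tree `F - e + g` avoids `e`,
hence is at least as heavy as `T`, and therefore
`w F ≥ w T - w g + w e ≥ w T - w f + w e`, which is the weight of `T - f + e`.
-/

section Exchange

variable {V : Type*} {G H T : SimpleGraph V} {e : Sym2 V} {u v x y : V}

lemma exists_mem_edges_not_reachable (p : G.Walk u v) (h : ¬H.Reachable u v) :
    ∃ x y, s(x, y) ∈ p.edges ∧ ¬H.Reachable x y := by
  obtain ⟨d, hd, hfst, hsnd⟩ := p.exists_boundary_dart {z | H.Reachable u z} (.refl u) h
  exact ⟨d.fst, d.snd, List.mem_map_of_mem hd, fun hr ↦ hsnd (hfst.trans hr)⟩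

lemma connected_of_sup_edge (h : (H ⊔ edge x y).Connected) (hxy : H.Reachable x y) :
    H.Connected := by
  have := h.nonempty
  refine ⟨fun a b ↦ by_contra fun hab ↦ ?_⟩
  obtain ⟨c, d, hcd, hnr⟩ := exists_mem_edges_not_reachable (h a b).some hab
  rcases Walk.adj_of_mem_edges _ hcd with hadj | hadj
  · exact hnr hadj.reachable
  · rcases (edge_adj ..).1 hadj with ⟨⟨rfl, rfl⟩ | ⟨rfl, rfl⟩, -⟩
    exacts [hnr hxy, hnr hxy.symm]

lemma isTree_deleteEdges_sup_edge (hT : T.IsTree) (hxy : ¬(T.deleteEdges {e}).Reachable x y) :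
    (T.deleteEdges {e} ⊔ edge x y).IsTree := by
  induction e with | h a b
  set H := T.deleteEdges {s(a, b)} ⊔ edge x y
  have hH : H.IsAcyclic := (hT.isAcyclic.anti (deleteEdges_le _)).sup_edge_of_not_reachable hxy
  have hTH : T ≤ H ⊔ edge a b := fun c d hcd ↦ by
    by_cases h : s(c, d) = s(a, b) <;> simp [H, adj_edge, deleteEdges_adj, hcd, hcd.ne, h]
  refine ⟨connected_of_sup_edge (hT.connected.mono hTH) (by_contra fun hab ↦ ?_), hH⟩
  -- If `H` did not join `a` to `b`, then `H ⊔ edge a b` would be an acyclic graph containing `T`,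
  -- so by maximality of trees the edge `s(x, y)` would already lie in `T`.
  have hmax : Maximal IsAcyclic T := (isTree_iff_maximal_isAcyclic.1 hT).2
  have hHT : H ≤ T := le_sup_left.trans (hmax.le_of_ge (hH.sup_edge_of_not_reachable hab) hTH)
  have hne : x ≠ y := by rintro rfl; exact hxy (.refl x)
  have hHxy : H.Adj x y := .inr (by simp [edge_adj, hne])
  by_cases h : s(x, y) = s(a, b)
  · have hHab : H.Adj a b := H.mem_edgeSet.1 (h ▸ hHxy)
    exact hab hHab.reachable
  · have hTxy : (T.deleteEdges {s(a, b)}).Adj x y := deleteEdges_adj.2 ⟨hHT hHxy, h⟩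
    exact hxy hTxy.reachable

lemma not_reachable_deleteEdges_of_mem_edges (hT : T.IsAcyclic) {p : T.Walk u v} (hp : p.IsPath)
    (he : e ∈ p.edges) : ¬(T.deleteEdges {e}).Reachable u v := by
  intro h
  obtain ⟨q, hq⟩ := h.exists_isPath
  have hpq : p = q.mapLe (deleteEdges_le _) :=
    congrArg Subtype.val ((hT.subsingleton_path u v).elim ⟨p, hp⟩ ⟨_, hq.mapLe _⟩)
  rw [hpq, Walk.edges_mapLe_eq_edges] at he
  simpa using q.edges_subset_edgeSet he

lemma fromEdgeSet_union_sdiff_singleton (huv : s(u, v) ≠ e) :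
    fromEdgeSet ((T.edgeSet ∪ {s(u, v)}) \ {e}) = T.deleteEdges {e} ⊔ edge u v := by
  have hsdiff : ({s(u, v)} \ {e} : Set (Sym2 V)) = {s(u, v)} :=
    Set.sdiff_singleton_eq_self (by simpa using huv.symm)
  rw [Set.union_sdiff_distrib, hsdiff, fromEdgeSet_union, fromEdgeSet_sdiff, fromEdgeSet_edgeSet,
    deleteEdges, edge]

lemma le_deleteEdges_singleton (hHG : H ≤ G) (he : e ∉ H.edgeSet) : H ≤ G.deleteEdges {e} := by
  rw [← deleteEdges_eq_self.2 (Set.disjoint_singleton_right.2 he)]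
  exact deleteEdges_mono hHG

end Exchange

section Weight

variable {V : Type*} {H T : SimpleGraph V} {e : Sym2 V} {x y : V}

lemma totalWeight_sup_edge (w : Sym2 V → ℝ) (hH : H.edgeSet.Finite) (hne : x ≠ y)
    (hxy : ¬H.Adj x y) : totalWeight w (H ⊔ edge x y) = totalWeight w H + w s(x, y) := by
  rw [totalWeight, edgeSet_sup, edgeSet_edge_of_ne hne, Set.union_singleton,
    finsum_mem_insert w hxy hH, add_comm, totalWeight]

lemma totalWeight_deleteEdges_singleton (w : Sym2 V → ℝ) (hT : T.edgeSet.Finite)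
    (he : e ∈ T.edgeSet) : totalWeight w (T.deleteEdges {e}) = totalWeight w T - w e := by
  rw [totalWeight, totalWeight, edgeSet_deleteEdges,
    ← finsum_mem_add_sdiff (Set.singleton_subset_iff.2 he) hT, finsum_mem_singleton,
    add_sub_cancel_left]

lemma totalWeight_deleteEdges_sup_edge (w : Sym2 V → ℝ) (hT : T.edgeSet.Finite)
    (he : e ∈ T.edgeSet) (hxy : ¬(T.deleteEdges {e}).Reachable x y) :
    totalWeight w (T.deleteEdges {e} ⊔ edge x y) = totalWeight w T - w e + w s(x, y) := by
  have hne : x ≠ y := by rintro rfl; exact hxy (.refl x)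
  have hfin : (T.deleteEdges {e}).edgeSet.Finite := hT.subset (edgeSet_mono (deleteEdges_le _))
  rw [totalWeight_sup_edge w hfin hne fun h ↦ hxy h.reachable,
    totalWeight_deleteEdges_singleton w hT he]

end Weight

namespace IsMinSpanningTree

variable {V : Type*} {G H T F : SimpleGraph V} {w w' : Sym2 V → ℝ} {u v : V} {c : ℝ}

lemma of_le (hT : IsMinSpanningTree G w T) (hTH : T ≤ H) (hHG : H ≤ G) :
    IsMinSpanningTree H w T :=
  ⟨hTH, hT.2.1, fun F hF ↦ hT.2.2 F (hF.trans hHG)⟩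

lemma congr (hT : IsMinSpanningTree G w T) (h : Set.EqOn w w' G.edgeSet) :
    IsMinSpanningTree G w' T := by
  have hweight {F : SimpleGraph V} (hF : F ≤ G) : totalWeight w F = totalWeight w' F :=
    finsum_mem_congr rfl (h.mono (edgeSet_mono hF))
  refine ⟨hT.1, hT.2.1, fun F hF hFtree ↦ ?_⟩
  rw [← hweight hT.1, ← hweight hF]
  exact hT.2.2 F hF hFtree

lemma deleteEdges_singleton_of_eqOn {e : Sym2 V} (hT : IsMinSpanningTree G w T)
    (he : e ∉ T.edgeSet) (h : Set.EqOn w w' (G.edgeSet \ {e})) :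
    IsMinSpanningTree (G.deleteEdges {e}) w' T :=
  (hT.of_le (le_deleteEdges_singleton hT.1 he) (deleteEdges_le _)).congr
    (by rwa [edgeSet_deleteEdges])

variable [Finite V]

lemma totalWeight_sub_add_le_of_mem_edgeSet (hT : IsMinSpanningTree (G.deleteEdges {s(u, v)}) w T)
    (p : T.Walk u v) (hp : ∀ g ∈ p.edges, w g ≤ c) (hF : F ≤ G) (hFtree : F.IsTree)
    (huv : s(u, v) ∈ F.edgeSet) :
    totalWeight w T - c + w s(u, v) ≤ totalWeight w F := by
  have hbridge : F.IsBridge s(u, v) := isAcyclic_iff_forall_isBridge.1 hFtree.isAcyclic huv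
  obtain ⟨x, y, hmem, hxy⟩ := exists_mem_edges_not_reachable p (isBridge_iff.1 hbridge)
  have hle : F.deleteEdges {s(u, v)} ⊔ edge x y ≤ G.deleteEdges {s(u, v)} :=
    sup_le (deleteEdges_mono hF) ((edge_le_iff _).2 (.inr (hT.1 (p.adj_of_mem_edges hmem))))
  calc totalWeight w T - c + w s(u, v)
      ≤ totalWeight w (F.deleteEdges {s(u, v)} ⊔ edge x y) - w s(x, y) + w s(u, v) := by
        gcongr
        exacts [hT.2.2 _ hle (isTree_deleteEdges_sup_edge hFtree hxy), hp _ hmem]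
    _ = totalWeight w F := by
        rw [totalWeight_deleteEdges_sup_edge w (Set.toFinite _) huv hxy]
        ring

lemma min_le_totalWeight (hT : IsMinSpanningTree (G.deleteEdges {s(u, v)}) w T) (p : T.Walk u v)
    (hp : ∀ g ∈ p.edges, w g ≤ c) (hF : F ≤ G) (hFtree : F.IsTree) :
    min (totalWeight w T) (totalWeight w T - c + w s(u, v)) ≤ totalWeight w F := by
  by_cases huv : s(u, v) ∈ F.edgeSet
  · exact min_le_of_right_le (hT.totalWeight_sub_add_le_of_mem_edgeSet p hp hF hFtree huv)
  · exact min_le_of_left_le (hT.2.2 F (le_deleteEdges_singleton hF huv) hFtree)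

lemma of_deleteEdges (hT : IsMinSpanningTree (G.deleteEdges {s(u, v)}) w T) (p : T.Walk u v)
    (hp : ∀ g ∈ p.edges, w g ≤ w s(u, v)) : IsMinSpanningTree G w T := by
  refine ⟨hT.1.trans (deleteEdges_le _), hT.2.1, fun F hF hFtree ↦ ?_⟩
  exact (le_min le_rfl (by linarith)).trans (hT.min_le_totalWeight p hp hF hFtree)

lemma exchange (hT : IsMinSpanningTree (G.deleteEdges {s(u, v)}) w T) (huv : G.Adj u v)
    {p : T.Walk u v} (hp : p.IsPath) {f : Sym2 V} (hf : f ∈ p.edges)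
    (hfmax : ∀ g ∈ p.edges, w g ≤ w f) (hle : w s(u, v) ≤ w f) :
    IsMinSpanningTree G w (T.deleteEdges {f} ⊔ edge u v) := by
  have hsep := not_reachable_deleteEdges_of_mem_edges hT.2.1.isAcyclic hp hf
  have hTG : T ≤ G := hT.1.trans (deleteEdges_le _)
  refine ⟨sup_le ((deleteEdges_le _).trans hTG) ((edge_le_iff _).2 (.inr huv)),
    isTree_deleteEdges_sup_edge hT.2.1 hsep, fun F hF hFtree ↦ ?_⟩
  rw [totalWeight_deleteEdges_sup_edge w (Set.toFinite _) (p.edges_subset_edgeSet hf) hsep]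
  exact (le_min (by linarith) le_rfl).trans (hT.min_le_totalWeight p hfmax hF hFtree)

end IsMinSpanningTree

theorem mst_weight_decrease_update_general {V : Type*} [Finite V] {G T : SimpleGraph V}
    {w w' : Sym2 V → ℝ} (hT : IsMinSpanningTree G w T) {u v : V} (huv : G.Adj u v)
    (hnt : s(u, v) ∉ T.edgeSet) (hagree : ∀ g ∈ G.edgeSet, g ≠ s(u, v) → w' g = w g)
    {p : T.Walk u v} (hp : p.IsPath) {f : Sym2 V} (hf : f ∈ p.edges)
    (hfmax : ∀ f' ∈ p.edges, w' f' ≤ w' f) :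
    (w' f ≤ w' s(u, v) → IsMinSpanningTree G w' T) ∧
    (w' s(u, v) ≤ w' f →
      IsMinSpanningTree G w' (fromEdgeSet ((T.edgeSet ∪ {s(u, v)}) \ {f}))) := by
  have hT' : IsMinSpanningTree (G.deleteEdges {s(u, v)}) w' T :=
    hT.deleteEdges_singleton_of_eqOn hnt fun g hg ↦ (hagree g hg.1 hg.2).symm
  have hne : s(u, v) ≠ f := fun h ↦ hnt (h ▸ p.edges_subset_edgeSet hf)
  rw [fromEdgeSet_union_sdiff_singleton hne]
  exact ⟨fun hle ↦ hT'.of_deleteEdges p fun g hg ↦ (hfmax g hg).trans hle,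
    hT'.exchange huv hp hf hfmax⟩

/-- Correctness of the weight-decrease update for dynamic minimum spanning trees.
Decrease the weight of a non-tree edge `e = s(u,v)` of `G`, where `T` is the minimum
spanning tree, and let `f` be the maximum-weight edge on the unique path `p` in `T` from
`u` to `v`.  If `w'(e) > w'(f)` then `T` remains minimum; otherwise `(T ∪ {e}) \ {f}` is
the new minimum spanning tree. -/
theorem mst_weight_decrease_update {V : Type*} [Fintype V]
    (G : SimpleGraph V) (hG : G.Connected)
    (w w' : Sym2 V → ℝ) (hw : Set.InjOn w G.edgeSet) (hw' : Set.InjOn w' G.edgeSet)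
    (T : SimpleGraph V) (hT : IsMinSpanningTree G w T)
    (u v : V) (huv : G.Adj u v) (hnt : s(u, v) ∉ T.edgeSet)
    (hagree : ∀ g ∈ G.edgeSet, g ≠ s(u, v) → w' g = w g)
    (hdec : w' s(u, v) < w s(u, v))
    (p : T.Walk u v) (hp : p.IsPath)
    (f : Sym2 V) (hf : f ∈ p.edges)
    (hfmax : ∀ f' ∈ p.edges, w' f' ≤ w' f) :
    (w' f < w' s(u, v) → IsMinSpanningTree G w' T) ∧
    (¬ w' f < w' s(u, v) →
      IsMinSpanningTree G w'
        (SimpleGraph.fromEdgeSet ((T.edgeSet ∪ {s(u, v)}) \ {f}))) := by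
  have h := mst_weight_decrease_update_general hT huv hnt hagree hp hf hfmax
  exact ⟨fun hlt ↦ h.1 hlt.le, fun hnlt ↦ h.2 (not_lt.1 hnlt)⟩
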